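/- Every face of a spectrahedron is exposed: if A(t) = A_0 + t_1 A_1 + ⋯ + t_n A_n is a linear matrix polynomial and F is a face of S = S(A), then F is an exposed face of S. -/

import Mathlib

open MvPolynomial

/-- A face of a convex set `S ⊆ ℝⁿ`: a nonempty convex subset `F ⊆ S` such that whenever
`x, y ∈ S`, `λ ∈ (0,1)` and `λx + (1-λ)y ∈ F`, then `x, y ∈ F`. -/
def IsFaceOf {n : ℕ} (S F : Set (Fin n → ℝ)) : Prop :=
  F.Nonempty ∧ Convex ℝ F ∧ F ⊆ S ∧
    ∀ x ∈ S, ∀ y ∈ S, ∀ l : ℝ, 0 < l → l < 1 →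
      l • x + (1 - l) • y ∈ F → x ∈ F ∧ y ∈ F

/-- The affine-linear function `x ↦ c + a·x` on `ℝⁿ`. -/
def affEval {n : ℕ} (a : Fin n → ℝ) (c : ℝ) (x : Fin n → ℝ) : ℝ :=
  c + ∑ i, a i * x i

/-- `F` is an exposed face of `S`: either `F = S` or there is a nonzero affine-linear
function `ℓ` with `ℓ ≥ 0` on `S`, `{ℓ = 0} ∩ S ≠ ∅` and `{ℓ = 0} ∩ S = F`. -/
def IsExposedFaceOf {n : ℕ} (S F : Set (Fin n → ℝ)) : Prop :=
  F = S ∨ ∃ (a : Fin n → ℝ) (c : ℝ), affEval a c ≠ 0 ∧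
    (∀ x ∈ S, 0 ≤ affEval a c x) ∧
    ({x | affEval a c x = 0} ∩ S).Nonempty ∧
    {x | affEval a c x = 0} ∩ S = F

/-- The linear matrix polynomial `A(x) = A₀ + x₁A₁ + ⋯ + xₙAₙ` evaluated at `x`. -/
def matPoly {n k : ℕ} (A0 : Matrix (Fin k) (Fin k) ℝ) (A : Fin n → Matrix (Fin k) (Fin k) ℝ)
    (x : Fin n → ℝ) : Matrix (Fin k) (Fin k) ℝ :=
  A0 + ∑ i, x i • A i

/-- The spectrahedron `S(A) = {x ∈ ℝⁿ | A(x) ⪰ 0}`. -/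
def spectrahedron {n k : ℕ} (A0 : Matrix (Fin k) (Fin k) ℝ)
    (A : Fin n → Matrix (Fin k) (Fin k) ℝ) : Set (Fin n → ℝ) :=
  {x | (matPoly A0 A x).PosSemidef}

open Matrix in
lemma aux_quad {k : ℕ} {M : Matrix (Fin k) (Fin k) ℝ} (hM : M.PosSemidef) :
    ∃ B : Matrix (Fin k) (Fin k) ℝ, ∀ v, v ⬝ᵥ M *ᵥ v = (B *ᵥ v) ⬝ᵥ (B *ᵥ v) := by
  open scoped MatrixOrder in
  obtain ⟨B, rfl⟩ := CStarAlgebra.nonneg_iff_eq_star_mul_self.mp hM.nonneg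
  refine ⟨B, fun v => ?_⟩
  rw [← Matrix.mulVec_mulVec, dotProduct_mulVec, star_eq_conjTranspose, vecMul_conjTranspose]
  simp

open Matrix in
lemma aux_nonneg {k : ℕ} {M : Matrix (Fin k) (Fin k) ℝ} (hM : M.PosSemidef) (v : Fin k → ℝ) :
    0 ≤ v ⬝ᵥ M *ᵥ v := by
  simpa using hM.dotProduct_mulVec_nonneg v

open Matrix in
lemma aux_zero {k : ℕ} {M : Matrix (Fin k) (Fin k) ℝ} (hM : M.PosSemidef) (v : Fin k → ℝ) :
    v ⬝ᵥ M *ᵥ v = 0 ↔ M *ᵥ v = 0 := by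
  simpa using hM.dotProduct_mulVec_zero_iff v

open Matrix in
lemma aux_bound {k : ℕ} (D : Matrix (Fin k) (Fin k) ℝ) :
    ∃ c : ℝ, 0 < c ∧ ∀ u, (D *ᵥ u) ⬝ᵥ (D *ᵥ u) ≤ c * (u ⬝ᵥ u) := by
  have h0 : 0 ≤ ∑ i, ∑ j, D i j ^ 2 := Finset.sum_nonneg fun i _ =>
    Finset.sum_nonneg fun j _ => sq_nonneg _
  refine ⟨(∑ i, ∑ j, D i j ^ 2) + 1, by linarith, fun u => ?_⟩
  have hu : u ⬝ᵥ u = ∑ j, u j ^ 2 := by simp [dotProduct, sq]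
  have h1 : 0 ≤ ∑ j, u j ^ 2 := Finset.sum_nonneg fun j _ => sq_nonneg _
  have : (D *ᵥ u) ⬝ᵥ (D *ᵥ u) ≤ (∑ i, ∑ j, D i j ^ 2) * ∑ j, u j ^ 2 := by
    rw [Finset.sum_mul]
    simp only [dotProduct, mulVec]
    refine Finset.sum_le_sum fun i _ => ?_
    rw [← sq]
    exact Finset.sum_mul_sq_le_sq_mul_sq _ _ _
  rw [hu]
  linarith

open Matrix in
lemma aux_dom {k : ℕ} {M N : Matrix (Fin k) (Fin k) ℝ} (hM : M.PosSemidef) (hN : N.PosSemidef)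
    (h : ∀ v, M *ᵥ v = 0 → N *ᵥ v = 0) :
    ∃ c : ℝ, 0 < c ∧ ∀ v, v ⬝ᵥ N *ᵥ v ≤ c * (v ⬝ᵥ M *ᵥ v) := by
  obtain ⟨B, hB⟩ := aux_quad hM
  obtain ⟨C, hC⟩ := aux_quad hN
  have hle : LinearMap.ker B.mulVecLin ≤ LinearMap.ker C.mulVecLin := by
    intro v hv
    rw [LinearMap.mem_ker, mulVecLin_apply] at hv ⊢
    have h1 : M *ᵥ v = 0 := (aux_zero hM v).1 (by rw [hB, hv]; simp)
    have h2 := (aux_zero hN v).2 (h v h1)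
    rw [hC] at h2
    exact dotProduct_self_eq_zero.1 h2
  obtain ⟨D, hD⟩ := LinearMap.exists_extend
    (((LinearMap.ker B.mulVecLin).liftQ C.mulVecLin hle).comp
      B.mulVecLin.quotKerEquivRange.symm.toLinearMap)
  have hDB : ∀ v, D (B *ᵥ v) = C *ᵥ v := by
    intro v
    have := LinearMap.congr_fun hD ⟨B.mulVecLin v, LinearMap.mem_range_self _ v⟩
    simp only [LinearMap.comp_apply, Submodule.subtype_apply, LinearEquiv.coe_coe,
      LinearMap.quotKerEquivRange_symm_apply_image] at this
    simpa using this
  obtain ⟨c, hc, hcb⟩ := aux_bound (LinearMap.toMatrix' D)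
  refine ⟨c, hc, fun v => ?_⟩
  have := hcb (B *ᵥ v)
  rw [LinearMap.toMatrix'_mulVec, hDB] at this
  rw [hB, hC]
  exact this

lemma aux_comb {n k : ℕ} (A0 : Matrix (Fin k) (Fin k) ℝ) (A : Fin n → Matrix (Fin k) (Fin k) ℝ)
    (x y : Fin n → ℝ) (s t : ℝ) (h : s + t = 1) :
    matPoly A0 A (s • x + t • y) = s • matPoly A0 A x + t • matPoly A0 A y := by
  unfold matPoly
  simp only [Pi.add_apply, Pi.smul_apply, smul_eq_mul, add_smul, smul_add, Finset.smul_sum,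
    mul_smul, Finset.sum_add_distrib]
  nth_rewrite 1 [← one_smul ℝ A0]
  rw [← h, add_smul]
  abel

open Matrix in
/-- Every face of a spectrahedron is exposed. -/
theorem main_aux {n k : ℕ}
    (A0 : Matrix (Fin k) (Fin k) ℝ) (A : Fin n → Matrix (Fin k) (Fin k) ℝ)
    (S : Set (Fin n → ℝ))
    (hS : S = spectrahedron A0 A) :
    ∀ F : Set (Fin n → ℝ), IsFaceOf S F → IsExposedFaceOf S F := by
  rintro F ⟨hne, hconv, hFS, hface⟩
  have hmem : ∀ x, x ∈ S ↔ (matPoly A0 A x).PosSemidef := by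
    intro x; rw [hS]; rfl
  let K : (Fin n → ℝ) → Submodule ℝ (Fin k → ℝ) := fun x =>
    LinearMap.ker (matPoly A0 A x).mulVecLin
  have hK : ∀ x v, v ∈ K x ↔ matPoly A0 A x *ᵥ v = 0 := fun x v => by
    simp [K]
  obtain ⟨x0, hx0, hmin⟩ : ∃ x0 ∈ F, ∀ y ∈ F,
      Module.finrank ℝ (K x0) ≤ Module.finrank ℝ (K y) := by
    have := (InvImage.wf (fun x => Module.finrank ℝ (K x)) Nat.lt_wfRel.wf).has_min F hne
    obtain ⟨m, hm, h⟩ := this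
    exact ⟨m, hm, fun y hy => not_lt.1 (h y hy)⟩
  have hker : ∀ y ∈ F, K x0 ≤ K y := by
    intro y hy
    have hz : (1/2 : ℝ) • x0 + (1/2 : ℝ) • y ∈ F :=
      hconv hx0 hy (by norm_num) (by norm_num) (by norm_num)
    have hP0 := (hmem _).1 (hFS hx0)
    have hPy := (hmem _).1 (hFS hy)
    have hsplit : ∀ v ∈ K ((1/2 : ℝ) • x0 + (1/2 : ℝ) • y), v ∈ K x0 ∧ v ∈ K y := by
      intro v hv
      rw [hK, aux_comb _ _ _ _ _ _ (by norm_num)] at hv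
      have h1 : v ⬝ᵥ ((1/2 : ℝ) • matPoly A0 A x0 + (1/2 : ℝ) • matPoly A0 A y) *ᵥ v = 0 := by
        rw [hv]; simp
      simp only [add_mulVec, smul_mulVec, dotProduct_add, dotProduct_smul, smul_eq_mul] at h1
      have h2 := aux_nonneg hP0 v
      have h3 := aux_nonneg hPy v
      rw [hK, hK, ← aux_zero hP0, ← aux_zero hPy]
      constructor <;> linarith
    have heq := Submodule.eq_of_le_of_finrank_le (fun v hv => (hsplit v hv).1) (hmin _ hz)
    intro v hv
    rw [← heq] at hv
    exact (hsplit v hv).2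
  let b := Module.finBasis ℝ (K x0)
  let a : Fin n → ℝ := fun i => ∑ j, (b j : Fin k → ℝ) ⬝ᵥ A i *ᵥ (b j : Fin k → ℝ)
  let c : ℝ := ∑ j, (b j : Fin k → ℝ) ⬝ᵥ A0 *ᵥ (b j : Fin k → ℝ)
  have hl : ∀ x, affEval a c x =
      ∑ j, (b j : Fin k → ℝ) ⬝ᵥ matPoly A0 A x *ᵥ (b j : Fin k → ℝ) := by
    intro x
    simp only [affEval, a, c, matPoly, add_mulVec, dotProduct_add, Finset.sum_add_distrib,
      sum_mulVec, dotProduct_sum, smul_mulVec, dotProduct_smul, smul_eq_mul]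
    congr 1
    rw [Finset.sum_comm]
    refine Finset.sum_congr rfl fun i _ => ?_
    rw [Finset.sum_mul]
    exact Finset.sum_congr rfl fun j _ => mul_comm _ _
  have hnn : ∀ x ∈ S, 0 ≤ affEval a c x := by
    intro x hx
    rw [hl]
    exact Finset.sum_nonneg fun j _ => aux_nonneg ((hmem x).1 hx) _
  have hF0 : ∀ x ∈ F, affEval a c x = 0 := by
    intro x hx
    rw [hl]
    refine Finset.sum_eq_zero fun j _ => ?_
    rw [(hK x _).1 (hker x hx (b j).2)]
    simp
  have h0F : ∀ x ∈ S, affEval a c x = 0 → x ∈ F := by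
    intro x hx h
    have hPx := (hmem x).1 hx
    have hP0 := (hmem _).1 (hFS hx0)
    rw [hl, Finset.sum_eq_zero_iff_of_nonneg (fun j _ => aux_nonneg hPx _)] at h
    have hsub : K x0 ≤ K x := by
      intro v hv
      have hv2 := congrArg (Subtype.val) (b.sum_repr ⟨v, hv⟩)
      simp only [AddSubmonoidClass.coe_finsetSum, Submodule.coe_smul] at hv2
      refine (congrArg (· ∈ K x) hv2).mp ?_
      refine Submodule.sum_mem _ fun j _ => Submodule.smul_mem _ _ ?_
      rw [hK, ← aux_zero hPx]
      exact h j (Finset.mem_univ j)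
    obtain ⟨d, hd, hdom⟩ := aux_dom hP0 hPx
      (fun v hv => (hK x v).1 (hsub ((hK x0 v).2 hv)))
    -- y = (1+e) x0 - e x, e = 1/d
    have hy : (1 + 1/d) • x0 + (-(1/d)) • x ∈ S := by
      rw [hmem, aux_comb _ _ _ _ _ _ (by ring)]
      refine PosSemidef.of_dotProduct_mulVec_nonneg ?_ fun v => ?_
      · have h1 : (matPoly A0 A x0)ᵀ = matPoly A0 A x0 := by simpa [IsHermitian] using hP0.1
        have h2 : (matPoly A0 A x)ᵀ = matPoly A0 A x := by simpa [IsHermitian] using hPx.1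
        simp [IsHermitian, h1, h2]
      · simp only [add_mulVec, smul_mulVec, dotProduct_add, dotProduct_smul, smul_eq_mul,
          star_trivial]
        have h1 := hdom v
        have h2 := aux_nonneg hP0 v
        have h3 : (1/d) * (v ⬝ᵥ matPoly A0 A x *ᵥ v) ≤ v ⬝ᵥ matPoly A0 A x0 *ᵥ v := by
          rw [one_div, inv_mul_le_iff₀ hd]; exact h1
        have h4 : 0 ≤ (1/d) * (v ⬝ᵥ matPoly A0 A x0 *ᵥ v) := by positivity
        linarith
    have hpos : 0 < 1 + d := by linarith
    refine (hface x hx _ hy (1/(1+d)) (by positivity) ?_ ?_).1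
    · rw [div_lt_one hpos]; linarith
    · convert hx0 using 1
      ext i
      simp only [Pi.add_apply, Pi.smul_apply, smul_eq_mul]
      field_simp
      ring
  by_cases hz : affEval a c = 0
  · left
    exact Set.Subset.antisymm hFS fun x hx => h0F x hx (by rw [hz]; rfl)
  · right
    exact ⟨a, c, hz, hnn, ⟨x0, hF0 x0 hx0, hFS hx0⟩, Set.Subset.antisymm
      (fun x hx => h0F x hx.2 hx.1) fun x hx => ⟨hF0 x hx, hFS hx⟩⟩

/-- Every face of a spectrahedron is exposed. -/
theorem spectrahedron_faces_exposed {n k : ℕ}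
    (A0 : Matrix (Fin k) (Fin k) ℝ) (A : Fin n → Matrix (Fin k) (Fin k) ℝ)
    (hA0 : A0.IsSymm) (hA : ∀ i, (A i).IsSymm) (S : Set (Fin n → ℝ))
    (hS : S = spectrahedron A0 A) :
    ∀ F : Set (Fin n → ℝ), IsFaceOf S F → IsExposedFaceOf S F := by
  exact main_aux A0 A S hS
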